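/- Let u be a radial non-increasing weight on 𝔻 and let f be holomorphic on 𝔻 with u(z)|f(z)| ≤ 1 for all z ∈ 𝔻. Then for all integers t ≥ 0 and κ ≥ t + 3 and every ξ ∈ ℂ with |ξ| ≤ r_{κ+1}·r_{t+1}, the derivative satisfies |f′(ξ)| ≤ 4·2^{2^{κ−1}}/u(r_κ). -/

import Mathlib

noncomputable section

open Complex

/-- The open unit disc in ℂ. -/
def uD : Set ℂ := {z : ℂ | ‖z‖ < 1}

/-- Holomorphic on the unit disc. -/
def Holo (f : ℂ → ℂ) : Prop := DifferentiableOn ℂ f uD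

/-- A weight on 𝔻: continuous and strictly positive. -/
def IsWeight (v : ℂ → ℝ) : Prop :=
  ContinuousOn v uD ∧ ∀ z ∈ uD, 0 < v z

/-- Radial weight. -/
def Radial (v : ℂ → ℝ) : Prop :=
  ∀ z ∈ uD, ∀ w ∈ uD, ‖z‖ = ‖w‖ → v z = v w

/-- Non-increasing in the modulus. -/
def NonInc (v : ℂ → ℝ) : Prop :=
  ∀ z ∈ uD, ∀ w ∈ uD, ‖z‖ ≤ ‖w‖ → v w ≤ v z

/-- r₀ = 0, r_κ = 1 - 2^(-2^κ) for κ ≥ 1. -/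
def rseq (κ : ℕ) : ℝ := if κ = 0 then 0 else 1 - 1 / 2 ^ (2 ^ κ)

/-- Condition (LOG 1) for a single radial weight. -/
def Log1 (A : ℝ) (v : ℂ → ℝ) : Prop :=
  ∀ κ : ℕ, v (rseq κ : ℂ) ≤ A * v (rseq (κ + 1) : ℂ)

/-- Condition (LOG 2) for a single radial weight. -/
def Log2 (a : ℝ) (v : ℂ → ℝ) : Prop :=
  ∀ κ : ℕ, v (rseq (κ + 1) : ℂ) ≤ a * v (rseq κ : ℂ)

/-- The weight tends to 0 as |z| → 1. -/
def VanishAtOne (v : ℂ → ℝ) : Prop :=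
  ∀ ε > 0, ∃ r : ℝ, r < 1 ∧ ∀ z ∈ uD, r ≤ ‖z‖ → v z ≤ ε

/-- Associated growth function w~ of a growth condition w. -/
def growthTilde (w : ℂ → ℝ) (z : ℂ) : ℝ :=
  sSup {t : ℝ | ∃ g : ℂ → ℂ, Holo g ∧ (∀ x ∈ uD, ‖g x‖ ≤ w x) ∧ t = ‖g z‖}

/-- Associated weight ṽ = 1/(1/v)~. -/
def assocWeight (v : ℂ → ℝ) (z : ℂ) : ℝ := (growthTilde (fun x => 1 / v x) z)⁻¹

/-- Monotonicity of the double sequence: decreasing in n, increasing in N. -/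
def MonoSeq (a : ℕ → ℕ → ℂ → ℝ) : Prop :=
  ∀ N n, ∀ z ∈ uD, a N (n + 1) z ≤ a N n z ∧ a N n z ≤ a (N + 1) n z

/-- Condition (LOG) for a double sequence with constants 0 < a < 1 < A. -/
def SeqLOG (aa A : ℝ) (a : ℕ → ℕ → ℂ → ℝ) : Prop :=
  ∀ N n, Radial (a N n) ∧ NonInc (a N n) ∧ VanishAtOne (a N n) ∧
    Log1 A (a N n) ∧ Log2 aa (a N n)

/-- Condition (Q). -/
def CondQ (a : ℕ → ℕ → ℂ → ℝ) : Prop :=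
  ∀ N, ∃ M ≥ N, ∃ n, ∀ K ≥ M, ∀ m, ∀ ε > 0, ∃ k, ∃ S > 0,
    ∀ z ∈ uD, 1 / a M m z ≤ max (ε / a N n z) (S / a K k z)

/-- Condition (wQ). -/
def CondwQ (a : ℕ → ℕ → ℂ → ℝ) : Prop :=
  ∀ N, ∃ M ≥ N, ∃ n, ∀ K ≥ M, ∀ m, ∃ k, ∃ S > 0,
    ∀ z ∈ uD, 1 / a M m z ≤ max (S / a N n z) (S / a K k z)

/-- Condition (Q)~. -/
def CondQTilde (a : ℕ → ℕ → ℂ → ℝ) : Prop :=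
  ∀ N, ∃ M ≥ N, ∃ n, ∀ K ≥ M, ∀ m, ∀ ε > 0, ∃ k, ∃ S > 0,
    ∀ z ∈ uD, growthTilde (fun x => 1 / a M m x) z ≤
      growthTilde (fun x => max (ε / a N n x) (S / a K k x)) z

/-- Pointwise maximum max_{N=1,…,L} a_{N,n(N)}. -/
def finMax (a : ℕ → ℕ → ℂ → ℝ) (nn : ℕ → ℕ) (L : ℕ) (z : ℂ) : ℝ :=
  sSup {t : ℝ | ∃ N, 1 ≤ N ∧ N ≤ L ∧ t = a N (nn N) z}

/-- Condition (B). -/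
def CondB (a : ℕ → ℕ → ℂ → ℝ) : Prop :=
  ∀ nn : ℕ → ℕ, ∃ m, ∀ M, ∃ L, 1 ≤ L ∧ ∃ c > 0,
    ∀ z ∈ uD, a M m z ≤ c * finMax a nn L z

/-- Condition (B)~. -/
def CondBTilde (a : ℕ → ℕ → ℂ → ℝ) : Prop :=
  ∀ nn : ℕ → ℕ, ∃ m, ∀ M, ∃ L, 1 ≤ L ∧ ∃ c > 0,
    ∀ z ∈ uD, assocWeight (a M m) z ≤ c * assocWeight (finMax a nn L) z

/-- A weight is essential. -/
def Essential (v : ℂ → ℝ) : Prop :=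
  ∃ C > 0, ∀ z ∈ uD,
    growthTilde (fun x => 1 / v x) z ≤ 1 / v z ∧
    1 / v z ≤ C * growthTilde (fun x => 1 / v x) z

/-- Condition (Σ). -/
def CondSigma (a : ℕ → ℕ → ℂ → ℝ) : Prop :=
  ∀ N, ∃ K ≥ N, ∀ k, ∃ n ≥ k, ∀ ε > 0, ∃ Q : Set ℂ,
    IsCompact Q ∧ Q ⊆ uD ∧ ∀ z ∈ uD \ Q, a N n z / a K k z ≤ ε

/-- The Banach space Ha(𝔻) as a set of functions. -/
def HaSet (v : ℂ → ℝ) : Set (ℂ → ℂ) :=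
  {f | Holo f ∧ ∃ C : ℝ, ∀ z ∈ uD, v z * ‖f z‖ ≤ C}

/-!
Since `u` is non-increasing, `|f| ≤ 1 / u(r_κ)` on the whole disc `|z| ≤ r_κ`. If `|ξ| ≤ r_s` with
`s < κ`, then the disc about `ξ` of radius `r_κ - |ξ|` lies in it, and Cauchy's estimate bounds
`|f′(ξ)|` by `1 / (u(r_κ) (r_κ - |ξ|))`. Finally, with `q = 2^{-2^s}` one has `r_s ≤ 1 - q` and
`r_{s+1} = 1 - q²`, so that `r_κ - |ξ| ≥ r_{s+1} - r_s ≥ q - q² ≥ q / 2`.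
-/

lemma rseq_succ (κ : ℕ) : rseq (κ + 1) = 1 - (1 / 2 ^ 2 ^ κ) ^ 2 := by
  rw [rseq, if_neg κ.succ_ne_zero, div_pow, one_pow, ← pow_mul, ← pow_succ]

lemma rseq_le (κ : ℕ) : rseq κ ≤ 1 - 1 / 2 ^ 2 ^ κ := by
  unfold rseq
  split_ifs with hκ
  · norm_num [hκ]
  · exact le_rfl

lemma rseq_lt_one (κ : ℕ) : rseq κ < 1 :=
  (rseq_le κ).trans_lt (sub_lt_self _ (by positivity))

lemma half_mul_le_rseq_succ_sub_rseq (κ : ℕ) :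
    1 / 2 * (1 / 2 ^ 2 ^ κ) ≤ rseq (κ + 1) - rseq κ := by
  have hle := rseq_le κ
  rw [rseq_succ]
  set q : ℝ := 1 / 2 ^ 2 ^ κ
  have hq_half : q ≤ 1 / 2 :=
    one_div_le_one_div_of_le two_pos (le_self_pow₀ one_le_two (by positivity))
  calc 1 / 2 * q ≤ (1 - q) * q := by gcongr; linarith
    _ = 1 - q ^ 2 - (1 - q) := by ring
    _ ≤ 1 - q ^ 2 - rseq κ := by gcongr

lemma rseq_strictMono : StrictMono rseq :=
  strictMono_nat_of_lt_succ fun κ =>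
    sub_pos.1 (lt_of_lt_of_le (by positivity) (half_mul_le_rseq_succ_sub_rseq κ))

lemma rseq_nonneg (κ : ℕ) : 0 ≤ rseq κ := by
  simpa [rseq] using rseq_strictMono.monotone κ.zero_le

lemma norm_rseq (κ : ℕ) : ‖(rseq κ : ℂ)‖ = rseq κ :=
  Complex.norm_of_nonneg (rseq_nonneg κ)

lemma rseq_mem_uD (κ : ℕ) : (rseq κ : ℂ) ∈ uD :=
  (norm_rseq κ).trans_lt (rseq_lt_one κ)

section CauchyEstimate

variable {F : Type*} [NormedAddCommGroup F] {f : ℂ → F} {u : ℂ → ℝ} {ξ : ℂ}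

lemma NonInc.norm_le_div (hu : NonInc u) {C : ℝ} (hbd : ∀ z ∈ uD, u z * ‖f z‖ ≤ C) {z w : ℂ}
    (hw : w ∈ uD) (huw : 0 < u w) (hzw : ‖z‖ ≤ ‖w‖) : ‖f z‖ ≤ C / u w := by
  have hz : z ∈ uD := hzw.trans_lt hw
  rw [le_div_iff₀' huw]
  calc u w * ‖f z‖ ≤ u z * ‖f z‖ := by gcongr; exact hu z hz w hw hzw
    _ ≤ C := hbd z hz

variable [NormedSpace ℂ F]

lemma norm_deriv_le_div_sub_dist {c : ℂ} {ρ M : ℝ} (hf : DiffContOnCl ℂ f (Metric.ball c ρ))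
    (hM : ∀ z ∈ Metric.closedBall c ρ, ‖f z‖ ≤ M) (hξ : ξ ∈ Metric.ball c ρ) :
    ‖deriv f ξ‖ ≤ M / (ρ - dist ξ c) := by
  have hρ : ρ - dist ξ c + dist ξ c ≤ ρ := by simp
  exact norm_deriv_le_of_forall_mem_sphere_norm_le (sub_pos.2 hξ)
    (hf.mono (Metric.ball_subset_ball' hρ)) fun z hz =>
      hM z (Metric.closedBall_subset_closedBall' hρ (Metric.sphere_subset_closedBall hz))

lemma NonInc.norm_deriv_le (hu : NonInc u) (hf : DifferentiableOn ℂ f uD) {C : ℝ}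
    (hbd : ∀ z ∈ uD, u z * ‖f z‖ ≤ C) {w : ℂ} (hw : w ∈ uD) (huw : 0 < u w) (hξ : ‖ξ‖ < ‖w‖) :
    ‖deriv f ξ‖ ≤ C / u w / (‖w‖ - ‖ξ‖) := by
  have hdisc : closure (Metric.ball 0 ‖w‖) ⊆ uD := fun z hz =>
    (mem_closedBall_zero_iff.1 (Metric.closure_ball_subset_closedBall hz)).trans_lt hw
  simpa only [dist_zero_right] using
    norm_deriv_le_div_sub_dist (hf.mono hdisc).diffContOnCl
      (fun z hz => hu.norm_le_div hbd hw huw (mem_closedBall_zero_iff.1 hz))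
      (mem_ball_zero_iff.2 hξ)

theorem derivative_estimate_general (hu : NonInc u) (hf : DifferentiableOn ℂ f uD)
    (hbd : ∀ z ∈ uD, u z * ‖f z‖ ≤ 1) {s κ : ℕ} (hsκ : s < κ) (huκ : 0 < u (rseq κ : ℂ))
    (hξ : ‖ξ‖ ≤ rseq s) :
    ‖deriv f ξ‖ ≤ 2 * 2 ^ 2 ^ s / u (rseq κ : ℂ) := by
  have hgap : 1 / 2 * (1 / 2 ^ 2 ^ s) ≤ rseq κ - ‖ξ‖ :=
    (half_mul_le_rseq_succ_sub_rseq s).trans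
      (sub_le_sub (rseq_strictMono.monotone hsκ) hξ)
  have hξκ : ‖ξ‖ < ‖(rseq κ : ℂ)‖ :=
    (hξ.trans_lt (rseq_strictMono hsκ)).trans_eq (norm_rseq κ).symm
  calc ‖deriv f ξ‖ ≤ 1 / u (rseq κ : ℂ) / (rseq κ - ‖ξ‖) := by
        simpa only [norm_rseq] using hu.norm_deriv_le hf hbd (rseq_mem_uD κ) huκ hξκ
    _ ≤ 1 / u (rseq κ : ℂ) / (1 / 2 * (1 / 2 ^ 2 ^ s)) := by gcongr
    _ = 2 * 2 ^ 2 ^ s / u (rseq κ : ℂ) := by field_simp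

end CauchyEstimate

/-- derivative estimate |f′(ξ)| ≤ 4·2^{2^{κ−1}}/u(r_κ). -/
theorem derivative_estimate (u : ℂ → ℝ) (hw : IsWeight u) (hrad : Radial u) (hni : NonInc u)
    (f : ℂ → ℂ) (hf : Holo f) (hbd : ∀ z ∈ uD, u z * ‖f z‖ ≤ 1)
    (t κ : ℕ) (h : t + 3 ≤ κ) (ξ : ℂ)
    (hξ : ‖ξ‖ ≤ rseq (κ + 1) * rseq (t + 1)) :
    ‖deriv f ξ‖ ≤ 4 * 2 ^ 2 ^ (κ - 1) / u (rseq κ : ℂ) := by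
  have huκ : 0 < u (rseq κ : ℂ) := hw.2 _ (rseq_mem_uD κ)
  have hexp : t + 1 ≤ κ - 1 := by lia
  have hξt : ‖ξ‖ ≤ rseq (t + 1) :=
    hξ.trans (mul_le_of_le_one_left (rseq_nonneg _) (rseq_lt_one _).le)
  calc ‖deriv f ξ‖ ≤ 2 * 2 ^ 2 ^ (t + 1) / u (rseq κ : ℂ) :=
        derivative_estimate_general hni hf hbd (by lia) huκ hξt
    _ ≤ 4 * 2 ^ 2 ^ (κ - 1) / u (rseq κ : ℂ) := by gcongr <;> norm_num
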